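/- Equivalence of the two characterizations of reachability (paper's Theorem/Definition 1): a state s_r lies in the reachable set S_r(S₀) if and only if there exist an initial state s₀ ∈ S₀, a stationary stochastic policy π : S → PMF A, and a number of steps n such that the n-step state distribution induced by π from s₀ assigns positive probability to s_r. In other words, 's_r is reachable via some finite action sequence from some s₀ ∈ S₀' holds exactly when 'there exists a policy whose probability of encountering s_r within finitely many steps from some s₀ ∈ S₀ is non-zero'. (For the forward direction the action space A is assumed nonempty so that an arbitrary action sequence can be extended to a policy.) -/

import Mathlib

/-!
Unrolling a policy's Markov chain at its first step, each of its positive-probability paths picks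
an action of positive probability at every state it visits, and these actions form a sequence that
reaches the same state. Conversely, a state-independent policy that gives every action of a list `L`
positive probability plays exactly `L` in its first `L.length` steps with positive probability. The
uniform distribution on the finitely many actions of `L` serves for this, whereas a single policy
with full support need not exist when the action space is uncountable.
-/

open scoped ENNReal

/-- State distribution obtained by executing a finite list of actions from a state. -/
noncomputable def stepDist {S A : Type*} (T : S → A → PMF S) : S → List A → PMF S
  | s, [] => PMF.pure s
  | s, a :: L => (T s a).bind (fun x => stepDist T x L)

/-- `s'` is reachable from `s` if some finite action sequence reaches it with positive probability. -/
def Reachable {S A : Type*} (T : S → A → PMF S) (s s' : S) : Prop :=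
  ∃ L : List A, 0 < stepDist T s L s'

/-- The reachable set of a set of initial states. -/
def ReachSet {S A : Type*} (T : S → A → PMF S) (S₀ : Set S) : Set S :=
  { s' | ∃ s₀ ∈ S₀, Reachable T s₀ s' }

/-- One-step state kernel of a stationary stochastic policy. -/
noncomputable def polKernel {S A : Type*} (T : S → A → PMF S) (π : S → PMF A) (s : S) : PMF S :=
  (π s).bind (fun a => T s a)

/-- `n`-step state distribution induced by a stationary stochastic policy from `s₀`. -/
noncomputable def polDist {S A : Type*} (T : S → A → PMF S) (π : S → PMF A) (s₀ : S) :
    ℕ → PMF S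
  | 0 => PMF.pure s₀
  | n + 1 => (polDist T π s₀ n).bind (polKernel T π)

section Policy

variable {S A : Type*} {T : S → A → PMF S} {π : S → PMF A}

theorem mem_support_polKernel_iff {s s' : S} :
    s' ∈ (polKernel T π s).support ↔ ∃ a ∈ (π s).support, s' ∈ (T s a).support :=
  PMF.mem_support_bind_iff _ _ _

theorem polDist_succ_eq_polKernel_bind (T : S → A → PMF S) (π : S → PMF A) (s : S) (n : ℕ) :
    polDist T π s (n + 1) = (polKernel T π s).bind fun x => polDist T π x n := by
  induction n with
  | zero => simp only [polDist, PMF.pure_bind, PMF.bind_pure]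
  | succ n ih =>
    calc polDist T π s (n + 2)
        = (polDist T π s (n + 1)).bind (polKernel T π) := rfl
      _ = ((polKernel T π s).bind fun x => polDist T π x n).bind (polKernel T π) := by rw [ih]
      _ = (polKernel T π s).bind fun x => polDist T π x (n + 1) := PMF.bind_bind _ _ _

theorem mem_support_polDist_succ_iff {s s' : S} {n : ℕ} :
    s' ∈ (polDist T π s (n + 1)).support ↔
      ∃ a ∈ (π s).support, ∃ x ∈ (T s a).support, s' ∈ (polDist T π x n).support := by
  rw [polDist_succ_eq_polKernel_bind, PMF.mem_support_bind_iff]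
  constructor
  · rintro ⟨x, hx, hs'⟩
    obtain ⟨a, ha, hx⟩ := mem_support_polKernel_iff.1 hx
    exact ⟨a, ha, x, hx, hs'⟩
  · rintro ⟨a, ha, x, hx, hs'⟩
    exact ⟨x, mem_support_polKernel_iff.2 ⟨a, ha, hx⟩, hs'⟩

theorem mem_support_stepDist_cons_iff {s s' : S} {a : A} {L : List A} :
    s' ∈ (stepDist T s (a :: L)).support ↔
      ∃ x ∈ (T s a).support, s' ∈ (stepDist T x L).support :=
  PMF.mem_support_bind_iff _ _ _

theorem exists_mem_support_stepDist_of_mem_support_polDist {s s' : S} {n : ℕ}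
    (h : s' ∈ (polDist T π s n).support) :
    ∃ L : List A, L.length = n ∧ s' ∈ (stepDist T s L).support := by
  induction n generalizing s with
  | zero => exact ⟨[], rfl, h⟩
  | succ n ih =>
    obtain ⟨a, -, x, hx, hs'⟩ := mem_support_polDist_succ_iff.1 h
    obtain ⟨L, hL, hs'⟩ := ih hs'
    exact ⟨a :: L, congrArg (· + 1) hL, mem_support_stepDist_cons_iff.2 ⟨x, hx, hs'⟩⟩

theorem support_stepDist_subset_support_polDist {L : List A}
    (hL : ∀ a ∈ L, ∀ s, a ∈ (π s).support) (s : S) :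
    (stepDist T s L).support ⊆ (polDist T π s L.length).support := by
  induction L generalizing s with
  | nil => exact subset_rfl
  | cons a L ih =>
    intro s' h
    obtain ⟨ha, hL⟩ := List.forall_mem_cons.1 hL
    obtain ⟨x, hx, hs'⟩ := mem_support_stepDist_cons_iff.1 h
    exact mem_support_polDist_succ_iff.2 ⟨a, ha s, x, hx, ih hL x hs'⟩

end Policy

theorem exists_pmf_subset_support {α : Type*} [Nonempty α] {s : Set α} (hs : s.Finite) :
    ∃ p : PMF α, s ⊆ p.support := by
  classical
  obtain ⟨a₀⟩ := ‹Nonempty α›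
  refine ⟨PMF.uniformOfFinset (insert a₀ hs.toFinset) (Finset.insert_nonempty _ _), fun a ha => ?_⟩
  rw [PMF.mem_support_uniformOfFinset_iff]
  exact Finset.mem_insert_of_mem (hs.mem_toFinset.2 ha)

/-- Theorem/Definition 1: the two characterizations of the reachable set coincide. -/
theorem mem_reachSet_iff_policy {S A : Type*} [Nonempty A] (T : S → A → PMF S) (S₀ : Set S)
    (s_r : S) :
    s_r ∈ ReachSet T S₀ ↔
      ∃ s₀ ∈ S₀, ∃ π : S → PMF A, ∃ n : ℕ, 0 < polDist T π s₀ n s_r := by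
  constructor
  · rintro ⟨s₀, hs₀, L, hL⟩
    obtain ⟨p, hp⟩ := exists_pmf_subset_support L.finite_toSet
    have hreach : s_r ∈ (polDist T (fun _ => p) s₀ L.length).support :=
      support_stepDist_subset_support_polDist (fun _ ha _ => hp ha) s₀
        ((PMF.apply_pos_iff _ _).1 hL)
    exact ⟨s₀, hs₀, fun _ => p, L.length, (PMF.apply_pos_iff _ _).2 hreach⟩
  · rintro ⟨s₀, hs₀, π, n, hn⟩
    obtain ⟨L, -, hL⟩ :=
      exists_mem_support_stepDist_of_mem_support_polDist ((PMF.apply_pos_iff _ _).1 hn)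
    exact ⟨s₀, hs₀, L, (PMF.apply_pos_iff _ _).2 hL⟩
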